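/- Let A be the real involutive algebra ℂ ⊕ ℍ ⊕ M₃(ℂ) acting on a finite-dimensional complex Hilbert space, and consider the determinant condition defining SU(A) ⊂ U(A) for the 96-dimensional representation H_F. Then the connected component of the identity of SU(A_F) is isomorphic to (U(1) × SU(2) × SU(3)) / Γ for a finite abelian group Γ; in particular the Lie algebra of SU(A_F) is u(1) ⊕ su(2) ⊕ su(3). -/

import Mathlib

open Matrix
open scoped Quaternion

/-- The algebra `A_F = ℂ ⊕ ℍ ⊕ M₃(ℂ)`. -/
abbrev AF : Type := ℂ × ℍ[ℝ] × Matrix (Fin 3) (Fin 3) ℂ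

/-- The standard embedding of the quaternions into `M₂(ℂ)`. -/
noncomputable def quatToM2 (q : ℍ[ℝ]) : Matrix (Fin 2) (Fin 2) ℂ :=
  !![⟨q.re, q.imI⟩, ⟨q.imJ, q.imK⟩; ⟨-q.imJ, q.imK⟩, ⟨q.re, -q.imI⟩]

/-- The determinant of the action of `u = (λ, q, m) ∈ A_F` on the `96`-dimensional
Hilbert space `H_F` (three generations of the `32`-dimensional bimodule `M_F`):
per generation, `(λ, λ̄)` on right-handed leptons, `q` on the left-handed lepton
doublet, `(λ, λ̄) ⊗ 1₃` and `q ⊗ 1₃` on quarks, `λ` on the four antileptons and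
`m ⊗ 1₄` on antiquarks. -/
noncomputable def DetHF (u : AF) : ℂ :=
  ((Matrix.diagonal ![u.1, starRingEnd ℂ u.1]).det * (quatToM2 u.2.1).det *
      (Matrix.diagonal ![u.1, starRingEnd ℂ u.1]).det ^ 3 * (quatToM2 u.2.1).det ^ 3 *
      u.1 ^ 4 * (u.2.2).det ^ 4) ^ 3

/-- The unimodular unitary group `SU(A_F) = {u ∈ U(A_F) : Det(u) = 1}`, as a subset
of `U(A_F)`. -/
noncomputable def SUAF : Set (unitary AF) := {u : unitary AF | DetHF (u : AF) = 1}

open scoped Matrix.Norms.L2Operator in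
theorem aux_joined (u : unitary (Matrix (Fin 3) (Fin 3) ℂ)) : Joined u 1 := by
  have hfin : (spectrum ℂ (u : Matrix (Fin 3) (Fin 3) ℂ)).Finite := Matrix.finite_spectrum _
  obtain ⟨θ, hθ⟩ : ∃ θ : ℝ, -Complex.exp (θ * Complex.I) ∉
      spectrum ℂ (u : Matrix (Fin 3) (Fin 3) ℂ) := by
    by_contra! hcon
    have h1 : (Set.Ico (0 : ℝ) 1).Infinite := Set.Ico_infinite (by norm_num)
    refine h1 (Set.Finite.of_finite_image (f := fun θ : ℝ => -Complex.exp (θ * Complex.I))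
      (hfin.subset ?_) ?_)
    · rintro _ ⟨θ, _, rfl⟩
      exact hcon θ
    · intro a ha b hb hab
      have h2 : Complex.exp (a * Complex.I) = Complex.exp (b * Complex.I) := neg_injective hab
      have hpi := Real.pi_gt_three
      have h3 := Complex.exp_inj_of_neg_pi_lt_of_le_pi (x := a * Complex.I) (y := b * Complex.I)
        (by simp; linarith [ha.1]) (by simp; linarith [ha.2]) (by simp; linarith [hb.1])
        (by simp; linarith [hb.2]) h2
      simpa using h3
  have hsc : ∀ t : ℝ, Complex.exp (t * Complex.I) • (u : Matrix (Fin 3) (Fin 3) ℂ) ∈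
      unitary (Matrix (Fin 3) (Fin 3) ℂ) := by
    intro t
    have h : Complex.exp (t * Complex.I) ∈ unitary ℂ := by
      rw [Unitary.mem_iff]
      have : star (Complex.exp (t * Complex.I)) = Complex.exp (-(t * Complex.I)) := by
        rw [Complex.star_def, ← Complex.exp_conj]; simp
      rw [this, ← Complex.exp_add, ← Complex.exp_add]; simp
    exact (Unitary.smul_mem_of_mem h u.2)
  let v : ℝ → unitary (Matrix (Fin 3) (Fin 3) ℂ) := fun t => ⟨_, hsc t⟩
  have hv : Continuous v := by
    refine Continuous.subtype_mk ?_ _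
    fun_prop
  have hv0 : v 0 = u := by ext1; simp [v]
  have j1 : Joined (v 0) (v (-θ)) := by
    have := (PathConnectedSpace.joined (0:ℝ) (-θ))
    exact this.map hv
  have j2 : Joined (v (-θ)) 1 := by
    apply Joined.symm
    apply Unitary.joined
    have := (Unitary.norm_sub_one_lt_two_iff (v (-θ)).2).2
    refine this ?_
    intro hmem
    apply hθ
    have h4 : (v (-θ) : Matrix (Fin 3) (Fin 3) ℂ) =
      (Units.mk0 (Complex.exp ((-θ : ℝ) * Complex.I)) (Complex.exp_ne_zero _)) •
        (u : Matrix (Fin 3) (Fin 3) ℂ) := rfl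
    rw [h4, spectrum.unit_smul_eq_smul] at hmem
    rw [Set.mem_smul_set] at hmem
    obtain ⟨y, hy, hy2⟩ := hmem
    have : y = -Complex.exp (θ * Complex.I) := by
      have h5 : Complex.exp ((-θ : ℝ) * Complex.I) * y = -1 := hy2
      have h6 : Complex.exp (θ * Complex.I) * Complex.exp ((-θ : ℝ) * Complex.I) = 1 := by
        rw [← Complex.exp_add]; simp
      calc y = (Complex.exp (θ * Complex.I) * Complex.exp ((-θ : ℝ) * Complex.I)) * y := by
              rw [h6, one_mul]
        _ = _ := by rw [mul_assoc, h5]; ring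
    rwa [← this]
  rw [hv0] at j1
  exact j1.trans j2

theorem aux_U3 : IsPreconnected (Set.univ : Set (unitary (Matrix (Fin 3) (Fin 3) ℂ))) := by
  have : PathConnectedSpace (unitary (Matrix (Fin 3) (Fin 3) ℂ)) :=
    ⟨⟨1⟩, fun x y => (aux_joined x).trans (aux_joined y).symm⟩
  exact isPreconnected_univ

theorem aux_quat_unit (q : ℍ[ℝ]) : q ∈ unitary ℍ[ℝ] ↔ Quaternion.normSq q = 1 := by
  rw [Unitary.mem_iff, Quaternion.star_mul_self, Quaternion.self_mul_star, and_self]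
  rw [← Quaternion.coe_one, Quaternion.coe_inj]

theorem aux_S3 : IsPreconnected (Metric.sphere (0 : ℍ[ℝ]) 1) := by
  refine (isPathConnected_sphere ?_ _ zero_le_one).isConnected.isPreconnected
  rw [← Module.finrank_eq_rank, Quaternion.finrank_eq_four]
  norm_num

theorem aux_Sp1 : IsPreconnected (Set.univ : Set (unitary ℍ[ℝ])) := by
  have h : (Subtype.val '' (Set.univ : Set (unitary ℍ[ℝ]))) = Metric.sphere (0 : ℍ[ℝ]) 1 := by
    ext q
    rw [Set.image_univ, Subtype.range_coe, mem_sphere_zero_iff_norm, SetLike.mem_coe,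
      aux_quat_unit, Quaternion.normSq_eq_norm_mul_self]
    constructor
    · intro h
      nlinarith [norm_nonneg q]
    · intro h
      rw [h, one_mul]
  have h2 := aux_S3
  rw [← h] at h2
  exact Topology.IsInducing.subtypeVal.isPreconnected_image.1 h2

noncomputable def m2q (A : Matrix (Fin 2) (Fin 2) ℂ) : ℍ[ℝ] :=
  ⟨(A 0 0).re, (A 0 0).im, (A 0 1).re, (A 0 1).im⟩

theorem m2q_quat (q : ℍ[ℝ]) : m2q (quatToM2 q) = q := by
  ext <;> simp [m2q, quatToM2]

theorem quat_mul (p q : ℍ[ℝ]) : quatToM2 (p * q) = quatToM2 p * quatToM2 q := by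
  ext i j
  fin_cases i <;> fin_cases j <;>
    simp [quatToM2, Matrix.mul_apply, Fin.sum_univ_two, Complex.ext_iff] <;> constructor <;> ring

theorem quat_one : quatToM2 1 = 1 := by
  ext i j
  fin_cases i <;> fin_cases j <;> simp [quatToM2, Complex.ext_iff]

theorem quat_star (q : ℍ[ℝ]) : quatToM2 (star q) = star (quatToM2 q) := by
  ext i j
  fin_cases i <;> fin_cases j <;> simp [quatToM2, Complex.ext_iff, Matrix.star_apply]

theorem quat_det (q : ℍ[ℝ]) : (quatToM2 q).det = (Quaternion.normSq q : ℝ) := by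
  rw [Quaternion.normSq_def', Complex.ext_iff, Complex.ofReal_re, Complex.ofReal_im]
  simp [quatToM2, Matrix.det_fin_two]
  constructor <;> ring

theorem quat_m2q (A : Matrix (Fin 2) (Fin 2) ℂ) (hA : A ∈ specialUnitaryGroup (Fin 2) ℂ) :
    quatToM2 (m2q A) = A := by
  rw [mem_specialUnitaryGroup_iff] at hA
  obtain ⟨h1, h2⟩ := hA
  have h3 : star A = A.adjugate := by
    have h4 := (Unitary.mem_iff.1 h1).1
    calc star A = star A * (A * A.adjugate) := by rw [Matrix.mul_adjugate, h2]; simp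
      _ = _ := by rw [← mul_assoc, h4, one_mul]
  rw [Matrix.adjugate_fin_two] at h3
  have e1 := congrFun (congrFun h3 0) 0
  have e2 := congrFun (congrFun h3 1) 0
  simp [Matrix.star_apply, Complex.ext_iff] at e1 e2
  ext i j
  fin_cases i <;> fin_cases j <;> simp [quatToM2, m2q, Complex.ext_iff] <;>
    constructor <;> linarith [e1.1, e1.2, e2.1, e2.2]

theorem m2q_unitary (A : Matrix (Fin 2) (Fin 2) ℂ) (hA : A ∈ specialUnitaryGroup (Fin 2) ℂ) :
    m2q A ∈ unitary ℍ[ℝ] := by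
  rw [aux_quat_unit]
  have := quat_det (m2q A)
  rw [quat_m2q A hA, (mem_specialUnitaryGroup_iff.1 hA).2] at this
  exact_mod_cast this.symm

theorem quat_mem (q : ℍ[ℝ]) (hq : q ∈ unitary ℍ[ℝ]) :
    quatToM2 q ∈ specialUnitaryGroup (Fin 2) ℂ := by
  rw [mem_specialUnitaryGroup_iff]
  constructor
  · refine Unitary.mem_iff.2 ?_
    rw [← quat_star, ← quat_mul, ← quat_mul, (Unitary.mem_iff.1 hq).1, (Unitary.mem_iff.1 hq).2,
      quat_one]
    simp
  · rw [quat_det, (aux_quat_unit q).1 hq]; simp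

theorem AF_mem (u : AF) : u ∈ unitary AF ↔ u.1 ∈ unitary ℂ ∧ u.2.1 ∈ unitary ℍ[ℝ] ∧
    u.2.2 ∈ unitary (Matrix (Fin 3) (Fin 3) ℂ) := by
  simp only [Unitary.mem_iff, Prod.ext_iff, Prod.fst_mul, Prod.snd_mul, Prod.fst_star,
    Prod.snd_star, Prod.fst_one, Prod.snd_one]
  tauto

theorem detHF_eq (u : AF) (hu : u ∈ unitary AF) : DetHF u = (u.1 * u.2.2.det) ^ 12 := by
  obtain ⟨h1, h2, h3⟩ := (AF_mem u).1 hu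
  have a : (Matrix.diagonal ![u.1, starRingEnd ℂ u.1]).det = 1 := by
    rw [Matrix.det_diagonal]
    simpa using (Unitary.mem_iff.1 h1).2
  rw [DetHF, a, quat_det, (aux_quat_unit _).1 h2]
  push_cast
  ring

/-- The candidate identity component. -/
def TT : Set (unitary AF) := {u | (u : AF).1 * (u : AF).2.2.det = 1}

theorem det_unit (m : Matrix (Fin 3) (Fin 3) ℂ) (hm : m ∈ unitary (Matrix (Fin 3) (Fin 3) ℂ)) :
    m.det ∈ unitary ℂ := Matrix.det_of_mem_unitary hm

noncomputable def psi (p : unitary ℍ[ℝ] × unitary (Matrix (Fin 3) (Fin 3) ℂ)) : unitary AF :=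
  ⟨(star (p.2 : Matrix (Fin 3) (Fin 3) ℂ).det, p.1, p.2), (AF_mem _).2
    ⟨Unitary.star_mem (det_unit _ p.2.2), p.1.2, p.2.2⟩⟩

theorem psi_cont : Continuous psi := by
  refine Continuous.subtype_mk ?_ _
  refine Continuous.prodMk (Continuous.star (Continuous.matrix_det ?_)) ?_ <;> fun_prop

theorem psi_range : Set.range psi = TT := by
  ext u
  constructor
  · rintro ⟨p, rfl⟩
    exact (Unitary.mem_iff.1 (det_unit _ p.2.2)).1
  · intro h
    obtain ⟨h1, h2, h3⟩ := (AF_mem u).1 u.2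
    refine ⟨(⟨_, h2⟩, ⟨_, h3⟩), ?_⟩
    apply Subtype.ext
    refine Prod.ext ?_ rfl
    change star (u : AF).2.2.det = (u : AF).1
    have h : (u : AF).1 * (u : AF).2.2.det = 1 := h
    have h4 := (Unitary.mem_iff.1 (det_unit _ h3)).2
    calc star (u : AF).2.2.det = ((u : AF).1 * (u : AF).2.2.det) * star (u : AF).2.2.det := by
          rw [h, one_mul]
      _ = _ := by rw [mul_assoc, h4, mul_one]

theorem TT_conn : IsPreconnected TT := by
  rw [← psi_range, ← Set.image_univ, ← Set.univ_prod_univ]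
  exact (aux_Sp1.prod aux_U3).image _ psi_cont.continuousOn

theorem TT_sub : TT ⊆ SUAF := by
  intro u hu
  have hu : (u : AF).1 * (u : AF).2.2.det = 1 := hu
  change DetHF u = 1
  rw [detHF_eq _ u.2, hu, one_pow]

theorem one_TT : (1 : unitary AF) ∈ TT := by
  simp [TT]

theorem comp_eq : connectedComponentIn SUAF 1 = TT := by
  apply Set.Subset.antisymm
  · let f : unitary AF → ℂ := fun u => (u : AF).1 * (u : AF).2.2.det
    have hf : Continuous f := by
      refine Continuous.mul (by fun_prop) (Continuous.matrix_det (by fun_prop))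
    have hp : IsPreconnected (f '' connectedComponentIn SUAF 1) :=
      isPreconnected_connectedComponentIn.image _ hf.continuousOn
    have hfin : (f '' connectedComponentIn SUAF 1).Finite := by
      refine Set.Finite.subset (s := {z : ℂ | z ^ 12 = 1}) ?_ ?_
      · refine ((Polynomial.nthRoots 12 (1:ℂ)).toFinset.finite_toSet).subset ?_
        intro z hz
        simpa [Polynomial.mem_nthRoots] using hz
      · rintro _ ⟨u, hu, rfl⟩
        have := connectedComponentIn_subset _ _ hu
        change DetHF u = 1 at this
        rw [detHF_eq _ u.2] at this
        exact this
    have hs : (f '' connectedComponentIn SUAF 1).Subsingleton := by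
      by_contra hne
      exact hp.infinite_of_nontrivial (Set.not_subsingleton_iff.1 hne) hfin
    intro u hu
    have := hs ⟨u, hu, rfl⟩ ⟨1, mem_connectedComponentIn (TT_sub one_TT), rfl⟩
    change f u = 1
    rw [this]
    exact one_TT
  · exact TT_conn.subset_connectedComponentIn one_TT TT_sub

/-- The covering homomorphism. -/
noncomputable def phi : (unitary ℂ × Matrix.specialUnitaryGroup (Fin 2) ℂ ×
            Matrix.specialUnitaryGroup (Fin 3) ℂ) →* unitary AF where
  toFun g := ⟨((g.1 : ℂ) ^ 3, m2q g.2.1, star (g.1 : ℂ) • (g.2.2 : Matrix (Fin 3) (Fin 3) ℂ)),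
    (AF_mem _).2 ⟨pow_mem g.1.2 3, m2q_unitary _ g.2.1.2,
      Unitary.smul_mem_of_mem (Unitary.star_mem g.1.2) (mem_specialUnitaryGroup_iff.1 g.2.2.2).1⟩⟩
  map_one' := by
    apply Subtype.ext
    refine Prod.ext ?_ (Prod.ext ?_ ?_)
    · simp
    · change m2q 1 = 1
      rw [← quat_one, m2q_quat]
    · simp
  map_mul' x y := by
    apply Subtype.ext
    refine Prod.ext ?_ (Prod.ext ?_ ?_)
    · simp [mul_pow]
    · change m2q ((x.2.1 : Matrix (Fin 2) (Fin 2) ℂ) * y.2.1) = m2q x.2.1 * m2q y.2.1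
      rw [← m2q_quat (m2q x.2.1 * m2q y.2.1), quat_mul, quat_m2q _ x.2.1.2, quat_m2q _ y.2.1.2]
    · simp [smul_smul, mul_comm]

theorem phi_range : Set.range phi = TT := by
  ext u
  constructor
  · rintro ⟨g, rfl⟩
    change (g.1 : ℂ) ^ 3 * (star (g.1 : ℂ) • (g.2.2 : Matrix (Fin 3) (Fin 3) ℂ)).det = 1
    rw [Matrix.det_smul, (mem_specialUnitaryGroup_iff.1 g.2.2.2).2]
    have := (Unitary.mem_iff.1 g.1.2).2
    simp only [Fintype.card_fin, mul_one]
    rw [← mul_pow, this, one_pow]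
  · intro h
    have h : (u : AF).1 * (u : AF).2.2.det = 1 := h
    obtain ⟨h1, h2, h3⟩ := (AF_mem u).1 u.2
    obtain ⟨z, hz⟩ := IsAlgClosed.exists_pow_nat_eq (u : AF).1 (n := 3) (by norm_num)
    have hzn : ‖z‖ = 1 := by
      have : ‖z‖ ^ 3 = 1 := by
        rw [← norm_pow, hz]
        exact CStarRing.norm_of_mem_unitary h1
      exact (pow_eq_one_iff_of_nonneg (norm_nonneg _) (by norm_num)).1 this
    have hzz : star z * z = 1 := by
      rw [Complex.star_def, ← Complex.normSq_eq_conj_mul_self, Complex.normSq_eq_norm_sq, hzn]; simp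
    have hzu : z ∈ unitary ℂ := Unitary.mem_iff.2 ⟨hzz, by rw [mul_comm]; exact hzz⟩
    refine ⟨(⟨z, hzu⟩, ⟨_, quat_mem _ h2⟩, ⟨z • (u : AF).2.2, ?_⟩), ?_⟩
    · rw [mem_specialUnitaryGroup_iff]
      refine ⟨Unitary.smul_mem_of_mem hzu h3, ?_⟩
      rw [Matrix.det_smul, Fintype.card_fin, hz, h]
    · apply Subtype.ext
      refine Prod.ext hz (Prod.ext (m2q_quat _) ?_)
      change star z • z • (u : AF).2.2 = (u : AF).2.2
      rw [smul_smul, hzz, one_smul]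

theorem phi_cont : Continuous phi := by
  refine Continuous.subtype_mk ?_ _
  refine Continuous.prodMk (by fun_prop) (Continuous.prodMk ?_ ?_)
  · have h : Continuous fun A : Matrix (Fin 2) (Fin 2) ℂ => m2q A := by
      have e : (fun A : Matrix (Fin 2) (Fin 2) ℂ => m2q A) = fun A =>
        Quaternion.linearIsometryEquivTuple.symm
          (!₂[(A 0 0).re, (A 0 0).im, (A 0 1).re, (A 0 1).im]) := by
        ext A <;> simp [m2q]
      rw [e]
      refine Quaternion.linearIsometryEquivTuple.symm.continuous.comp ?_
      refine (PiLp.continuous_toLp 2 _).comp ?_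
      refine continuous_pi fun i => ?_
      fin_cases i <;> simp <;> fun_prop
    exact h.comp (by fun_prop)
  · exact Continuous.smul (continuous_star.comp (continuous_subtype_val.comp continuous_fst))
      (continuous_subtype_val.comp (continuous_snd.comp continuous_snd))

theorem phi_ker (g : unitary ℂ × Matrix.specialUnitaryGroup (Fin 2) ℂ ×
            Matrix.specialUnitaryGroup (Fin 3) ℂ) (hg : phi g = 1) :
    (g.1 : ℂ) ^ 3 = 1 ∧ g.2.1 = 1 ∧
      (g.2.2 : Matrix (Fin 3) (Fin 3) ℂ) = (g.1 : ℂ) • 1 := by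
  have h0 := congrArg Subtype.val hg
  have h1 : (g.1 : ℂ) ^ 3 = 1 := congrArg Prod.fst h0
  have h2 : m2q g.2.1 = 1 := congrArg (fun x : AF => x.2.1) h0
  have h3 : star (g.1 : ℂ) • (g.2.2 : Matrix (Fin 3) (Fin 3) ℂ) = 1 :=
    congrArg (fun x : AF => x.2.2) h0
  refine ⟨h1, ?_, ?_⟩
  · apply Subtype.ext
    rw [← quat_m2q _ g.2.1.2, h2, quat_one]; rfl
  · rw [← h3, smul_smul, (Unitary.mem_iff.1 g.1.2).2, one_smul]


/-- `SU(A_F)` is, up to a finite abelian group `Γ`, the group `U(1)×SU(2)×SU(3)`: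
there is a continuous homomorphism from `U(1)×SU(2)×SU(3)` to `U(A_F)` landing in
`SU(A_F)`, with image exactly the connected component of the identity of `SU(A_F)`
and finite abelian kernel `Γ` (so the identity component is `(U(1)×SU(2)×SU(3))/Γ`). -/
theorem SUAF_identity_component :
    ∃ φ : (unitary ℂ × Matrix.specialUnitaryGroup (Fin 2) ℂ ×
            Matrix.specialUnitaryGroup (Fin 3) ℂ) →* unitary AF,
      Continuous φ ∧
      (∀ g, DetHF ((φ g : unitary AF) : AF) = 1) ∧
      Set.range φ = connectedComponentIn SUAF 1 ∧
      {g | φ g = 1}.Finite ∧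
      (∀ x y : unitary ℂ × Matrix.specialUnitaryGroup (Fin 2) ℂ ×
          Matrix.specialUnitaryGroup (Fin 3) ℂ,
        φ x = 1 → φ y = 1 → x * y = y * x) := by
  refine ⟨phi, phi_cont, ?_, ?_, ?_, ?_⟩
  · intro g
    have : phi g ∈ TT := phi_range ▸ Set.mem_range_self g
    exact TT_sub this
  · rw [phi_range, comp_eq]
  · refine Set.Finite.of_finite_image (f := fun g => (g.1 : ℂ)) ?_ ?_
    · refine ((Polynomial.nthRoots 3 (1:ℂ)).toFinset.finite_toSet).subset ?_
      rintro _ ⟨g, hg, rfl⟩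
      simpa [Polynomial.mem_nthRoots] using (phi_ker g hg).1
    · intro x hx y hy hxy
      have hxy : (x.1 : ℂ) = y.1 := hxy
      obtain ⟨-, a2, a3⟩ := phi_ker x hx
      obtain ⟨-, b2, b3⟩ := phi_ker y hy
      refine Prod.ext (Subtype.ext hxy) (Prod.ext (a2.trans b2.symm) (Subtype.ext ?_))
      rw [a3, b3, hxy]
  · intro x y hx hy
    obtain ⟨-, a2, a3⟩ := phi_ker x hx
    obtain ⟨-, b2, b3⟩ := phi_ker y hy
    refine Prod.ext (mul_comm _ _) (Prod.ext ?_ (Subtype.ext ?_))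
    · change x.2.1 * y.2.1 = y.2.1 * x.2.1
      rw [a2, b2]
    · change (x.2.2 : Matrix (Fin 3) (Fin 3) ℂ) * y.2.2 = y.2.2 * x.2.2
      rw [a3, b3]
      simp [smul_smul, mul_comm]
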